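/- The bump tower f satisfies: (1) 0 ≤ f(x) ≤ (3/2)·c_f for all x ∈ ℝ; (2) the intersection ∩_{k≥0} [a_k, b_k] consists of a single point x*, which is the unique maximizer of f, with f(x*) = c_f·Σ_{k=0}^∞ w_k^m; (3) f is nondecreasing on [0, x*] and nonincreasing on [x*, 1]. -/

import Mathlib

open Set MeasureTheory

/-- The basic mollifier `u₀(x) = exp(−1/(x(1/3 − x)))` on `(0, 1/3)`, `0` elsewhere. -/
noncomputable def u0 (x : ℝ) : ℝ :=
  if x ∈ Set.Ioo (0 : ℝ) (1 / 3) then Real.exp (-(1 / (x * (1 / 3 - x)))) else 0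

/-- The normalized primitive `u(x) = (∫₀^{1/3} u₀)⁻¹ · ∫_{−∞}^x u₀`. -/
noncomputable def uFn (x : ℝ) : ℝ :=
  (∫ t in (0 : ℝ)..(1 / 3), u0 t)⁻¹ * ∫ t in Set.Iic x, u0 t

/-- The bump function `B`. -/
noncomputable def bump (x : ℝ) : ℝ :=
  if x < 0 then 0
  else if x ≤ 1 / 3 then uFn x
  else if x < 2 / 3 then 1
  else if x ≤ 1 then uFn (1 - x)
  else 0

/-- The bump function rescaled to the interval `[a, b]`. -/
noncomputable def bumpOn (a b x : ℝ) : ℝ := bump ((x - a) / (b - a))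

/-- The interval widths: `w 0 = 1` and `w k = 3^(−k!)` for `k ≥ 1`. -/
noncomputable def wSeq : ℕ → ℝ := fun k => if k = 0 then 1 else (3 : ℝ) ^ (-(k.factorial : ℤ))

/-- `a, b : ℕ → ℝ` describe an admissible nested sequence of intervals:
`[a₀,b₀] = [0,1]` and `[a_{k+1}, b_{k+1}]` is a subinterval of
`[a_k + w_k/3, b_k − w_k/3]` of length `w_{k+1}`. -/
def IsNestedTower (a b : ℕ → ℝ) : Prop :=
  a 0 = 0 ∧ b 0 = 1 ∧
  ∀ k : ℕ, a k + wSeq k / 3 ≤ a (k + 1) ∧ b (k + 1) ≤ b k - wSeq k / 3 ∧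
    b (k + 1) - a (k + 1) = wSeq (k + 1)

/-- The bump tower `f(x) = c_f·Σ_{k=0}^∞ w_k^m·B_{[a_k,b_k]}(x)`. -/
noncomputable def towerFn (m : ℕ) (cf : ℝ) (a b : ℕ → ℝ) (x : ℝ) : ℝ :=
  cf * ∑' k : ℕ, wSeq k ^ m * bumpOn (a k) (b k) x

/-!
The point `x*` of the nested intervals lies in `[a_{k+1}, b_{k+1}]` for every `k`, hence in the
middle third of every `[a_k, b_k]`, which is the plateau of the `k`-th bump. So at `x*` all bumps
attain their maximum `1` simultaneously, and each of them increases up to `x*` and decreases after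
it; both properties pass to the series. Any other point leaves some `[a_k, b_k]`, where the `k`-th
bump vanishes, so the value there is strictly smaller.
-/

section Series

variable {ι α : Type*} {c : ι → ℝ}

lemma summable_mul_of_mem_Icc (hc : ∀ i, 0 ≤ c i) (hsum : Summable c) {t : ι → ℝ}
    (ht : ∀ i, t i ∈ Icc 0 1) : Summable fun i => c i * t i :=
  .of_nonneg_of_le (fun i => mul_nonneg (hc i) (ht i).1)
    (fun i => mul_le_of_le_one_right (hc i) (ht i).2) hsum

lemma tsum_mul_le_tsum (hc : ∀ i, 0 ≤ c i) (hsum : Summable c) {t : ι → ℝ}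
    (ht : ∀ i, t i ∈ Icc 0 1) : ∑' i, c i * t i ≤ ∑' i, c i :=
  (summable_mul_of_mem_Icc hc hsum ht).tsum_le_tsum
    (fun i => mul_le_of_le_one_right (hc i) (ht i).2) hsum

lemma tsum_mul_lt_tsum (hc : ∀ i, 0 ≤ c i) (hsum : Summable c) {t : ι → ℝ}
    (ht : ∀ i, t i ∈ Icc 0 1) {j : ι} (hcj : 0 < c j) (htj : t j < 1) :
    ∑' i, c i * t i < ∑' i, c i :=
  Summable.tsum_lt_tsum (fun i => mul_le_of_le_one_right (hc i) (ht i).2)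
    (mul_lt_of_lt_one_right hcj htj) (summable_mul_of_mem_Icc hc hsum ht) hsum

lemma monotoneOn_tsum_mul [Preorder α] (hc : ∀ i, 0 ≤ c i) (hsum : Summable c) {φ : ι → α → ℝ}
    (hφ : ∀ i x, φ i x ∈ Icc 0 1) {s : Set α} (hmono : ∀ i, MonotoneOn (φ i) s) :
    MonotoneOn (fun x => ∑' i, c i * φ i x) s := fun x hx y hy hxy =>
  (summable_mul_of_mem_Icc hc hsum (hφ · x)).tsum_le_tsum
    (fun i => mul_le_mul_of_nonneg_left (hmono i hx hy hxy) (hc i))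
    (summable_mul_of_mem_Icc hc hsum (hφ · y))

lemma antitoneOn_tsum_mul [Preorder α] (hc : ∀ i, 0 ≤ c i) (hsum : Summable c) {φ : ι → α → ℝ}
    (hφ : ∀ i x, φ i x ∈ Icc 0 1) {s : Set α} (hanti : ∀ i, AntitoneOn (φ i) s) :
    AntitoneOn (fun x => ∑' i, c i * φ i x) s :=
  (monotoneOn_tsum_mul (α := αᵒᵈ) hc hsum hφ fun i => (hanti i).dual_left).dual_left

end Series

lemma exists_iInter_Icc_eq_singleton {a b : ℕ → ℝ} (hanti : Antitone fun k => Icc (a k) (b k))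
    (hle : ∀ k, a k ≤ b k) (hlim : Filter.Tendsto (fun k => b k - a k) Filter.atTop (nhds 0)) :
    ∃ x, ⋂ k, Icc (a k) (b k) = {x} := by
  refine exists_eq_singleton_iff_nonempty_subsingleton.2
    ⟨⟨_, ciSup_mem_iInter_Icc_of_antitone_Icc hanti hle⟩, fun x hx y hy => ?_⟩
  rw [mem_iInter] at hx hy
  have hdist : ∀ k, dist x y ≤ b k - a k := fun k => Real.dist_le_of_mem_Icc (hx k) (hy k)
  exact dist_le_zero.1 (ge_of_tendsto' hlim hdist)

lemma u0_nonneg (x : ℝ) : 0 ≤ u0 x := by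
  unfold u0
  split_ifs <;> positivity

lemma u0_of_notMem_Ioo {x : ℝ} (hx : x ∉ Ioo (0 : ℝ) (1 / 3)) : u0 x = 0 := if_neg hx

lemma u0_pos {x : ℝ} (hx : x ∈ Ioo (0 : ℝ) (1 / 3)) : 0 < u0 x := by
  rw [u0, if_pos hx]
  positivity

lemma integrable_u0 : Integrable u0 := by
  have hind : u0 = (Ioo (0 : ℝ) (1 / 3)).indicator
      fun x => Real.exp (-(1 / (x * (1 / 3 - x)))) := by
    ext x
    simp only [u0, indicator]
  rw [hind, integrable_indicator_iff measurableSet_Ioo]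
  refine Measure.integrableOn_of_bounded (M := 1) measure_Ioo_lt_top.ne
    (Measurable.aestronglyMeasurable (by fun_prop)) ?_
  refine (ae_restrict_iff' measurableSet_Ioo).2 (.of_forall fun x hx => ?_)
  have hpos : 0 < x * (1 / 3 - x) := mul_pos hx.1 (sub_pos.2 hx.2)
  rw [Real.norm_of_nonneg (Real.exp_pos _).le, Real.exp_le_one_iff]
  exact neg_nonpos.2 (one_div_pos.2 hpos).le

lemma integral_u0_pos : 0 < ∫ t in (0 : ℝ)..(1 / 3), u0 t :=
  intervalIntegral.intervalIntegral_pos_of_pos_on integrable_u0.intervalIntegrable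
    (fun _ hx => u0_pos hx) (by norm_num)

lemma uFn_nonneg (x : ℝ) : 0 ≤ uFn x :=
  mul_nonneg (inv_nonneg.2 integral_u0_pos.le) (integral_nonneg u0_nonneg)

lemma monotone_uFn : Monotone uFn := fun _ _ hxy =>
  mul_le_mul_of_nonneg_left
    (setIntegral_mono_set integrable_u0.integrableOn (.of_forall u0_nonneg)
      (Iic_subset_Iic.2 hxy).eventuallyLE)
    (inv_nonneg.2 integral_u0_pos.le)

lemma uFn_of_nonpos {x : ℝ} (hx : x ≤ 0) : uFn x = 0 := by
  have hint : ∫ t in Iic x, u0 t = 0 := setIntegral_eq_zero_of_forall_eq_zero fun t ht =>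
    u0_of_notMem_Ioo fun h => h.1.not_ge (ht.out.trans hx)
  rw [uFn, hint, mul_zero]

lemma uFn_of_one_third_le {x : ℝ} (hx : 1 / 3 ≤ x) : uFn x = 1 := by
  have hint : ∫ t in Iic x, u0 t = ∫ t in (0 : ℝ)..(1 / 3), u0 t := by
    rw [intervalIntegral.integral_of_le (by norm_num)]
    exact setIntegral_eq_of_subset_of_forall_sdiff_eq_zero measurableSet_Iic
      (Ioc_subset_Iic_self.trans (Iic_subset_Iic.2 hx))
      fun t ht => u0_of_notMem_Ioo fun h => ht.2 (Ioo_subset_Ioc_self h)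
  rw [uFn, hint, inv_mul_cancel₀ integral_u0_pos.ne']

lemma uFn_le_one (x : ℝ) : uFn x ≤ 1 :=
  (monotone_uFn (le_max_left x (1 / 3))).trans_eq (uFn_of_one_third_le (le_max_right x (1 / 3)))

lemma bump_eq_uFn {x : ℝ} (hx : x ≤ 2 / 3) : bump x = uFn x := by
  unfold bump
  split_ifs with h0 h1
  · exact (uFn_of_nonpos h0.le).symm
  · rfl
  · exact (uFn_of_one_third_le (not_le.1 h1).le).symm
  · rw [uFn_of_one_third_le (not_le.1 h1).le, uFn_of_one_third_le (by linarith)]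
  · linarith

lemma bump_eq_uFn_one_sub {x : ℝ} (hx : 1 / 3 ≤ x) : bump x = uFn (1 - x) := by
  rcases le_or_gt x (2 / 3) with h | h
  · rw [bump_eq_uFn h, uFn_of_one_third_le hx, uFn_of_one_third_le (by linarith)]
  · unfold bump
    split_ifs
    · linarith
    · linarith
    · linarith
    · rfl
    · exact (uFn_of_nonpos (by linarith)).symm

lemma bump_mem_Icc (x : ℝ) : bump x ∈ Icc 0 1 := by
  rcases le_total x (2 / 3) with h | h
  · rw [bump_eq_uFn h]
    exact ⟨uFn_nonneg _, uFn_le_one _⟩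
  · rw [bump_eq_uFn_one_sub (by linarith)]
    exact ⟨uFn_nonneg _, uFn_le_one _⟩

lemma bump_of_mem_Icc {x : ℝ} (hx : x ∈ Icc (1 / 3 : ℝ) (2 / 3)) : bump x = 1 := by
  rw [bump_eq_uFn hx.2, uFn_of_one_third_le hx.1]

lemma bump_of_nonpos {x : ℝ} (hx : x ≤ 0) : bump x = 0 := by
  rw [bump_eq_uFn (by linarith), uFn_of_nonpos hx]

lemma bump_of_one_le {x : ℝ} (hx : 1 ≤ x) : bump x = 0 := by
  rw [bump_eq_uFn_one_sub (by linarith), uFn_of_nonpos (by linarith)]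

lemma monotoneOn_bump : MonotoneOn bump (Iic (2 / 3)) :=
  (monotone_uFn.monotoneOn _).congr fun _ hx => (bump_eq_uFn hx).symm

lemma antitoneOn_bump : AntitoneOn bump (Ici (1 / 3)) :=
  have hanti : Antitone fun x => uFn (1 - x) := fun _ _ hxy =>
    monotone_uFn (sub_le_sub_left hxy 1)
  (hanti.antitoneOn _).congr fun _ hx => (bump_eq_uFn_one_sub hx).symm

/-- The closed middle third of `[a, b]`, on which `bumpOn a b` is identically `1`. -/
def middleThird (a b : ℝ) : Set ℝ := Icc (a + (b - a) / 3) (b - (b - a) / 3)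

section BumpOn

variable {a b p : ℝ}

lemma middleThird_subset_Icc (hab : a ≤ b) : middleThird a b ⊆ Icc a b :=
  Icc_subset_Icc (by linarith) (by linarith)

lemma rescale_mem_Icc_of_mem_middleThird (hab : a < b) (hp : p ∈ middleThird a b) :
    (p - a) / (b - a) ∈ Icc (1 / 3 : ℝ) (2 / 3) := by
  have hlen : 0 < b - a := sub_pos.2 hab
  rw [mem_Icc, le_div_iff₀ hlen, div_le_iff₀ hlen]
  constructor <;> linarith [hp.1, hp.2]

lemma monotone_rescale (hab : a ≤ b) : Monotone fun x => (x - a) / (b - a) := fun _ _ hxy =>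
  div_le_div_of_nonneg_right (sub_le_sub_right hxy a) (sub_nonneg.2 hab)

lemma bumpOn_mem_Icc (a b x : ℝ) : bumpOn a b x ∈ Icc 0 1 := bump_mem_Icc _

lemma bumpOn_of_mem_middleThird (hab : a < b) (hp : p ∈ middleThird a b) : bumpOn a b p = 1 :=
  bump_of_mem_Icc (rescale_mem_Icc_of_mem_middleThird hab hp)

lemma bumpOn_of_notMem_Icc (hab : a < b) {x : ℝ} (hx : x ∉ Icc a b) : bumpOn a b x = 0 := by
  have hlen : 0 < b - a := sub_pos.2 hab
  rcases lt_or_ge x a with hxa | hax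
  · exact bump_of_nonpos (div_nonpos_of_nonpos_of_nonneg (by linarith) hlen.le)
  · have hbx : b < x := not_le.1 fun hxb => hx ⟨hax, hxb⟩
    exact bump_of_one_le ((one_le_div hlen).2 (by linarith))

lemma monotoneOn_bumpOn (hab : a < b) (hp : p ∈ middleThird a b) :
    MonotoneOn (bumpOn a b) (Iic p) :=
  monotoneOn_bump.comp ((monotone_rescale hab.le).monotoneOn _) fun _ hx =>
    (monotone_rescale hab.le hx).trans (rescale_mem_Icc_of_mem_middleThird hab hp).2

lemma antitoneOn_bumpOn (hab : a < b) (hp : p ∈ middleThird a b) :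
    AntitoneOn (bumpOn a b) (Ici p) :=
  antitoneOn_bump.comp_MonotoneOn ((monotone_rescale hab.le).monotoneOn _) fun _ hx =>
    (rescale_mem_Icc_of_mem_middleThird hab hp).1.trans (monotone_rescale hab.le hx)

end BumpOn

lemma wSeq_pos (k : ℕ) : 0 < wSeq k := by
  unfold wSeq
  split_ifs <;> positivity

lemma wSeq_le_one_third_pow (k : ℕ) : wSeq k ≤ (1 / 3 : ℝ) ^ k := by
  unfold wSeq
  split_ifs with hk
  · simp [hk]
  · rw [zpow_neg, zpow_natCast, one_div, inv_pow]
    exact inv_anti₀ (by positivity) (pow_le_pow_right₀ (by norm_num) k.self_le_factorial)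

lemma tendsto_wSeq : Filter.Tendsto wSeq Filter.atTop (nhds 0) :=
  squeeze_zero (fun k => (wSeq_pos k).le) wSeq_le_one_third_pow
    (tendsto_pow_atTop_nhds_zero_of_lt_one (by norm_num) (by norm_num))

lemma wSeq_pow_nonneg (m k : ℕ) : 0 ≤ wSeq k ^ m := pow_nonneg (wSeq_pos k).le m

section PowWSeq

variable {m : ℕ}

lemma wSeq_pow_le_one_third_pow (hm : 1 ≤ m) (k : ℕ) : wSeq k ^ m ≤ (1 / 3 : ℝ) ^ k := by
  have hle_one : wSeq k ≤ 1 :=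
    (wSeq_le_one_third_pow k).trans (pow_le_one₀ (by norm_num) (by norm_num))
  exact (pow_le_of_le_one (wSeq_pos k).le hle_one (by lia)).trans (wSeq_le_one_third_pow k)

lemma summable_one_third_pow : Summable fun k : ℕ => (1 / 3 : ℝ) ^ k :=
  summable_geometric_of_lt_one (by norm_num) (by norm_num)

lemma summable_wSeq_pow (hm : 1 ≤ m) : Summable fun k => wSeq k ^ m :=
  .of_nonneg_of_le (wSeq_pow_nonneg m) (wSeq_pow_le_one_third_pow hm)
    summable_one_third_pow

lemma tsum_wSeq_pow_le (hm : 1 ≤ m) : ∑' k, wSeq k ^ m ≤ 3 / 2 :=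
  calc ∑' k, wSeq k ^ m
      ≤ ∑' k : ℕ, (1 / 3 : ℝ) ^ k :=
        (summable_wSeq_pow hm).tsum_le_tsum (wSeq_pow_le_one_third_pow hm) summable_one_third_pow
    _ = 3 / 2 := by
        rw [tsum_geometric_of_lt_one (by norm_num) (by norm_num)]
        norm_num

end PowWSeq

namespace IsNestedTower

variable {a b : ℕ → ℝ}

lemma right_sub_left (hab : IsNestedTower a b) : ∀ k, b k - a k = wSeq k
  | 0 => by simp [hab.1, hab.2.1, wSeq]
  | k + 1 => (hab.2.2 k).2.2

lemma left_lt_right (hab : IsNestedTower a b) (k : ℕ) : a k < b k :=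
  sub_pos.1 (hab.right_sub_left k ▸ wSeq_pos k)

lemma Icc_succ_subset_middleThird (hab : IsNestedTower a b) (k : ℕ) :
    Icc (a (k + 1)) (b (k + 1)) ⊆ middleThird (a k) (b k) := by
  rw [middleThird, hab.right_sub_left k]
  exact Icc_subset_Icc (hab.2.2 k).1 (hab.2.2 k).2.1

lemma antitone_Icc (hab : IsNestedTower a b) : Antitone fun k => Icc (a k) (b k) :=
  antitone_nat_of_succ_le fun k =>
    (hab.Icc_succ_subset_middleThird k).trans (middleThird_subset_Icc (hab.left_lt_right k).le)

lemma exists_iInter_eq_singleton (hab : IsNestedTower a b) :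
    ∃ p, ⋂ k, Icc (a k) (b k) = {p} :=
  exists_iInter_Icc_eq_singleton hab.antitone_Icc (fun k => (hab.left_lt_right k).le)
    (tendsto_wSeq.congr fun k => (hab.right_sub_left k).symm)

lemma mem_middleThird (hab : IsNestedTower a b) {p : ℝ} (hp : p ∈ ⋂ k, Icc (a k) (b k)) (k : ℕ) :
    p ∈ middleThird (a k) (b k) :=
  hab.Icc_succ_subset_middleThird k (mem_iInter.1 hp (k + 1))

end IsNestedTower

section TowerFn

variable {m : ℕ} {cf : ℝ} {a b : ℕ → ℝ} {p : ℝ}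

lemma towerFn_nonneg (m : ℕ) (hcf : 0 ≤ cf) (a b : ℕ → ℝ) (x : ℝ) : 0 ≤ towerFn m cf a b x :=
  mul_nonneg hcf (tsum_nonneg fun k => mul_nonneg (wSeq_pow_nonneg m k) (bumpOn_mem_Icc _ _ x).1)

lemma towerFn_le (hm : 1 ≤ m) (hcf : 0 ≤ cf) (a b : ℕ → ℝ) (x : ℝ) :
    towerFn m cf a b x ≤ 3 / 2 * cf :=
  calc towerFn m cf a b x
      ≤ cf * ∑' k, wSeq k ^ m :=
        mul_le_mul_of_nonneg_left (tsum_mul_le_tsum (wSeq_pow_nonneg m) (summable_wSeq_pow hm)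
          fun _ => bumpOn_mem_Icc _ _ x) hcf
    _ ≤ cf * (3 / 2) := mul_le_mul_of_nonneg_left (tsum_wSeq_pow_le hm) hcf
    _ = 3 / 2 * cf := mul_comm _ _

lemma towerFn_of_mem_iInter (m : ℕ) (cf : ℝ) (hab : IsNestedTower a b)
    (hp : p ∈ ⋂ k, Icc (a k) (b k)) : towerFn m cf a b p = cf * ∑' k, wSeq k ^ m := by
  simp only [towerFn, bumpOn_of_mem_middleThird (hab.left_lt_right _) (hab.mem_middleThird hp _),
    mul_one]

lemma towerFn_lt_of_notMem_iInter (hm : 1 ≤ m) (hcf : 0 < cf) (hab : IsNestedTower a b) {x : ℝ}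
    (hx : x ∉ ⋂ k, Icc (a k) (b k)) : towerFn m cf a b x < cf * ∑' k, wSeq k ^ m := by
  obtain ⟨k, hk⟩ : ∃ k, x ∉ Icc (a k) (b k) := by simpa only [mem_iInter, not_forall] using hx
  have hzero : bumpOn (a k) (b k) x = 0 := bumpOn_of_notMem_Icc (hab.left_lt_right k) hk
  exact mul_lt_mul_of_pos_left
    (tsum_mul_lt_tsum (wSeq_pow_nonneg m) (summable_wSeq_pow hm) (fun _ => bumpOn_mem_Icc _ _ x)
      (pow_pos (wSeq_pos k) m) (hzero.trans_lt one_pos)) hcf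

lemma monotoneOn_towerFn (hm : 1 ≤ m) (hcf : 0 ≤ cf) (hab : IsNestedTower a b)
    (hp : p ∈ ⋂ k, Icc (a k) (b k)) : MonotoneOn (towerFn m cf a b) (Iic p) :=
  (monotone_mul_left_of_nonneg hcf).comp_monotoneOn
    (monotoneOn_tsum_mul (wSeq_pow_nonneg m) (summable_wSeq_pow hm) (fun _ => bumpOn_mem_Icc _ _)
      fun k => monotoneOn_bumpOn (hab.left_lt_right k) (hab.mem_middleThird hp k))

lemma antitoneOn_towerFn (hm : 1 ≤ m) (hcf : 0 ≤ cf) (hab : IsNestedTower a b)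
    (hp : p ∈ ⋂ k, Icc (a k) (b k)) : AntitoneOn (towerFn m cf a b) (Ici p) :=
  (monotone_mul_left_of_nonneg hcf).comp_antitoneOn
    (antitoneOn_tsum_mul (wSeq_pow_nonneg m) (summable_wSeq_pow hm) (fun _ => bumpOn_mem_Icc _ _)
      fun k => antitoneOn_bumpOn (hab.left_lt_right k) (hab.mem_middleThird hp k))

end TowerFn

/-- Basic properties of the bump tower: (1) `0 ≤ f ≤ (3/2)c_f`; (2) the nested intervals
intersect in a single point `x*`, the unique maximizer of `f`, where
`f(x*) = c_f·Σ_k w_k^m`; (3) `f` is nondecreasing on `[0,x*]` and nonincreasing on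
`[x*,1]`. -/
theorem towerFn_properties (m : ℕ) (hm : 1 ≤ m) (cf : ℝ) (hcf : 0 < cf)
    (a b : ℕ → ℝ) (hab : IsNestedTower a b) :
    (∀ x : ℝ, 0 ≤ towerFn m cf a b x ∧ towerFn m cf a b x ≤ 3 / 2 * cf) ∧
    ∃ xs : ℝ,
      (⋂ k : ℕ, Set.Icc (a k) (b k)) = {xs} ∧
      towerFn m cf a b xs = cf * ∑' k : ℕ, wSeq k ^ m ∧
      (∀ x : ℝ, x ≠ xs → towerFn m cf a b x < towerFn m cf a b xs) ∧
      MonotoneOn (towerFn m cf a b) (Set.Icc 0 xs) ∧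
      AntitoneOn (towerFn m cf a b) (Set.Icc xs 1) := by
  refine ⟨fun x => ⟨towerFn_nonneg m hcf.le a b x, towerFn_le hm hcf.le a b x⟩, ?_⟩
  obtain ⟨xs, hxs⟩ := hab.exists_iInter_eq_singleton
  have hmem : xs ∈ ⋂ k, Icc (a k) (b k) := hxs ▸ mem_singleton xs
  have hval := towerFn_of_mem_iInter m cf hab hmem
  refine ⟨xs, hxs, hval, fun x hx => ?_,
    (monotoneOn_towerFn hm hcf.le hab hmem).mono Icc_subset_Iic_self,
    (antitoneOn_towerFn hm hcf.le hab hmem).mono Icc_subset_Ici_self⟩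
  rw [hval]
  exact towerFn_lt_of_notMem_iInter hm hcf hab (hxs ▸ hx)
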